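/- Let Ω be a convex body in ℝ^m (a compact convex set with nonempty interior). For each t > 0, the function W_Ω(·,t) : ℝ^m → ℝ has exactly one critical point, i.e. there is a unique x ∈ ℝ^m at which the Fréchet derivative of x ↦ W_Ω(x,t) vanishes; moreover this point is the unique maximum point of W_Ω(·,t) (the unique hot spot of Ω at time t). -/

import Mathlib

open MeasureTheory Metric Set

noncomputable section

/-- Weierstrass' (heat) kernel on `ℝ^m`. -/
def heatKernel (m : ℕ) (z : EuclideanSpace ℝ (Fin m)) (t : ℝ) : ℝ :=
  (4 * Real.pi * t) ^ (-(m : ℝ) / 2) * Real.exp (-‖z‖ ^ 2 / (4 * t))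

/-- Space abbreviation. -/
abbrev EE (m : ℕ) := EuclideanSpace ℝ (Fin m)

/-- Unnormalised Gaussian. -/
def gg {m : ℕ} (s : ℝ) (z : EE m) : ENNReal := ENNReal.ofReal (Real.exp (-s * ‖z‖ ^ 2))

/-- Gaussian mass of `K` seen from `x`. -/
def FF {m : ℕ} (s : ℝ) (K : Set (EE m)) (x : EE m) : ENNReal :=
  ∫⁻ y, K.indicator (fun y => gg s (x - y)) y

lemma gg_meas {m : ℕ} (s : ℝ) : Measurable (gg (m := m) s) := by
  unfold gg; fun_prop

lemma change_var (m : ℕ) : ∃ c : ENNReal, ∀ H : EE m × EE m → ENNReal, Measurable H →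
    ∫⁻ z, H z ∂(volume.prod volume) =
      c * ∫⁻ z : EE m × EE m, H (z.1 + z.2, z.1 - z.2) ∂(volume.prod volume) := by
  let f : (EE m × EE m) →ₗ[ℝ] (EE m × EE m) :=
    { toFun := fun z => (z.1 + z.2, z.1 - z.2)
      map_add' := by intro x y; ext <;> simp <;> ring
      map_smul' := by intro r x; ext <;> simp <;> ring }
  let g : (EE m × EE m) →ₗ[ℝ] (EE m × EE m) :=
    { toFun := fun z => ((1/2:ℝ) • (z.1 + z.2), (1/2:ℝ) • (z.1 - z.2))
      map_add' := by intro x y; ext <;> simp <;> ring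
      map_smul' := by intro r x; ext <;> simp <;> ring }
  have hfg : ∀ z, f (g z) = z := by
    intro z; ext <;> simp [f, g] <;> ring
  have hdet : LinearMap.det g ≠ 0 := by
    have h1 : f ∘ₗ g = LinearMap.id := by
      apply LinearMap.ext; intro z; simpa using hfg z
    have h2 := congrArg LinearMap.det h1
    rw [LinearMap.det_comp, LinearMap.det_id] at h2
    intro h0; rw [h0] at h2; simp at h2
  have hmap := Measure.map_linearMap_addHaar_eq_smul_addHaar
    ((volume : Measure (EE m)).prod volume) hdet
  refine ⟨ENNReal.ofReal |(LinearMap.det g)⁻¹|, fun H hH => ?_⟩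
  have hg : Measurable g := g.continuous_of_finiteDimensional.measurable
  have hf : Measurable f := f.continuous_of_finiteDimensional.measurable
  have h3 : ∫⁻ z, H (f z) ∂(Measure.map g ((volume : Measure (EE m)).prod volume))
      = ∫⁻ z, H z ∂(volume.prod volume) := by
    have h4 := lintegral_map (μ := (volume : Measure (EE m)).prod volume) (hH.comp hf) hg
    simp only [Function.comp, hfg] at h4
    exact h4
  rw [← h3, hmap, lintegral_smul_measure]
  rfl

/-- symmetrised section -/
def KK {m : ℕ} (Ω : Set (EE m)) (p : EE m) : Set (EE m) := {q | p + q ∈ Ω ∧ p - q ∈ Ω}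

lemma prod_formula (m : ℕ) : ∃ c : ENNReal, ∀ (Ω : Set (EE m)), MeasurableSet Ω →
    ∀ (s : ℝ) (a d : EE m), FF s Ω (a + d) * FF s Ω (a - d) =
      c * ∫⁻ p, gg (2 * s) (a - p) * FF (2 * s) (KK Ω p) d := by
  obtain ⟨c, hc⟩ := change_var m
  refine ⟨c, fun Ω hΩ s a d => ?_⟩
  have hm : ∀ x : EE m, Measurable (Ω.indicator (fun y => gg s (x - y))) := fun x =>
    ((gg_meas s).comp (measurable_const.sub measurable_id)).indicator hΩ
  unfold FF
  rw [← lintegral_prod_mul (hm _).aemeasurable (hm _).aemeasurable]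
  have hH : Measurable (fun z : EE m × EE m => Ω.indicator (fun y => gg s (a + d - y)) z.1 *
      Ω.indicator (fun y => gg s (a - d - y)) z.2) :=
    ((hm _).comp measurable_fst).mul ((hm _).comp measurable_snd)
  rw [hc _ hH, lintegral_prod]
  · congr 1
    refine lintegral_congr fun p => ?_
    have hK : MeasurableSet (KK Ω p) :=
      (hΩ.preimage (measurable_const.add measurable_id)).inter
        (hΩ.preimage (measurable_const.sub measurable_id))
    rw [← lintegral_const_mul]
    · refine lintegral_congr fun q => ?_
      by_cases h1 : p + q ∈ Ω
      · by_cases h2 : p - q ∈ Ω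
        · have : q ∈ KK Ω p := ⟨h1, h2⟩
          simp only [h1, h2, this, indicator_of_mem]
          unfold gg
          rw [← ENNReal.ofReal_mul (Real.exp_pos _).le, ← ENNReal.ofReal_mul (Real.exp_pos _).le,
            ← Real.exp_add, ← Real.exp_add]
          congr 2
          have e := parallelogram_law_with_norm ℝ (a - p) (d - q)
          have e1 : a + d - (p + q) = a - p + (d - q) := by abel
          have e2 : a - d - (p - q) = a - p - (d - q) := by abel
          rw [e1, e2]; linear_combination (-s) * e
        · have : q ∉ KK Ω p := fun h => h2 h.2
          simp [h2, this]
      · have : q ∉ KK Ω p := fun h => h1 h.1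
        simp [h1, this]
    · exact ((gg_meas _).comp (measurable_const.sub measurable_id)).indicator hK
  · exact (hH.comp (by fun_prop : Measurable fun z : EE m × EE m =>
      (z.1 + z.2, z.1 - z.2))).aemeasurable

/-- Admissible sets. -/
structure Adm {m : ℕ} (ρ : ℝ) (K : Set (EE m)) : Prop where
  conv : Convex ℝ K
  closed : IsClosed K
  symm : ∀ x ∈ K, -x ∈ K
  bdd : K ⊆ closedBall 0 ρ

lemma KK_conv {m : ℕ} {Ω : Set (EE m)} (h : Convex ℝ Ω) (p : EE m) : Convex ℝ (KK Ω p) := by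
  intro x hx y hy a b ha hb hab
  constructor
  · have := h hx.1 hy.1 ha hb hab
    convert this using 1
    calc p + (a • x + b • y) = (a + b) • p + (a • x + b • y) := by rw [hab, one_smul]
      _ = _ := by module
  · have := h hx.2 hy.2 ha hb hab
    convert this using 1
    calc p - (a • x + b • y) = (a + b) • p - (a • x + b • y) := by rw [hab, one_smul]
      _ = _ := by module

lemma KK_adm {m : ℕ} {ρ : ℝ} {Ω : Set (EE m)} (h : Convex ℝ Ω) (hc : IsClosed Ω)
    (hb : Ω ⊆ closedBall 0 ρ) (p : EE m) : Adm ρ (KK Ω p) where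
  conv := KK_conv h p
  closed := (hc.preimage (continuous_const.add continuous_id)).inter
        (hc.preimage (continuous_const.sub continuous_id))
  symm := by
    intro x hx
    exact ⟨by simpa [sub_eq_add_neg] using hx.2, by simpa using hx.1⟩
  bdd := by
    intro q hq
    have h1 := hb hq.1
    have h2 := hb hq.2
    simp only [mem_closedBall, dist_zero_right] at *
    have : (2:ℝ) • q = (p + q) - (p - q) := by module
    have h3 : ‖(2:ℝ) • q‖ ≤ ρ + ρ := by
      rw [this]; exact (norm_sub_le _ _).trans (add_le_add h1 h2)
    rw [norm_smul] at h3
    norm_num at h3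
    linarith

lemma FF_neg {m : ℕ} {ρ : ℝ} {K : Set (EE m)} (hK : Adm ρ K) (s : ℝ) (d : EE m) :
    FF s K (-d) = FF s K d := by
  unfold FF
  rw [← lintegral_neg_eq_self]
  refine lintegral_congr fun y => ?_
  by_cases h : y ∈ K
  · have h' := hK.symm y h
    simp only [h, h', indicator_of_mem]
    unfold gg
    rw [← norm_neg]; congr 5; abel
  · have h' : -y ∉ K := fun h' => h (by simpa using hK.symm _ h')
    simp [h, h']

lemma step {m : ℕ} {ρ s B : ℝ} {d : EE m} (hB : 0 ≤ B)
    (h : ∀ K : Set (EE m), Adm ρ K → FF (2 * s) K d ≤ ENNReal.ofReal (B ^ 2) * FF (2 * s) K 0) :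
    ∀ K : Set (EE m), Adm ρ K → FF s K d ≤ ENNReal.ofReal B * FF s K 0 := by
  intro K hK
  obtain ⟨c, hc⟩ := prod_formula m
  have h1 := hc K hK.closed.measurableSet s 0 d
  have h2 := hc K hK.closed.measurableSet s 0 0
  rw [zero_add, zero_sub, FF_neg hK] at h1
  rw [add_zero, sub_zero] at h2
  rw [← ENNReal.pow_le_pow_left_iff two_ne_zero, mul_pow, pow_two (FF s K d), pow_two (FF s K 0),
    h1, h2, ← ENNReal.ofReal_pow hB, mul_left_comm, ← lintegral_const_mul' _ _ ENNReal.ofReal_ne_top]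
  refine mul_le_mul_right (lintegral_mono fun p => ?_) _
  simp only
  rw [mul_left_comm]
  gcongr
  exact h _ (KK_adm hK.conv hK.closed hK.bdd p)

lemma iter {m : ℕ} {ρ B : ℝ} {d : EE m} (hB : 0 ≤ B) (k : ℕ) : ∀ s : ℝ, 
    (∀ K : Set (EE m), Adm ρ K →
      FF (2 ^ k * s) K d ≤ ENNReal.ofReal (B ^ (2 ^ k)) * FF (2 ^ k * s) K 0) →
    ∀ K : Set (EE m), Adm ρ K → FF s K d ≤ ENNReal.ofReal B * FF s K 0 := by
  induction k with
  | zero => intro s h; simpa using h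
  | succ k ih =>
    intro s h
    apply ih
    apply step (by positivity)
    intro K hK
    have h' := h K hK
    have e1 : (2:ℝ) ^ (k + 1) * s = 2 * (2 ^ k * s) := by ring
    have e2 : B ^ 2 ^ (k + 1) = (B ^ 2 ^ k) ^ 2 := by rw [← pow_mul, pow_succ]
    rwa [e1, e2] at h'

open Pointwise in
lemma crude {m : ℕ} {ρ s : ℝ} (hs : 0 < s) (d : EE m) (k : ℕ) (K : Set (EE m)) (hK : Adm ρ K) :
    FF (2 ^ k * s) K d ≤
      ENNReal.ofReal (Real.exp (s * ρ ^ 2) * ((2 ^ k : ℕ) : ℝ) ^ m) * FF (2 ^ k * s) K 0 := by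
  have hmeas := hK.closed.measurableSet
  rcases K.eq_empty_or_nonempty with rfl | ⟨x0, hx0⟩
  · simp [FF]
  have h0 : (0 : EE m) ∈ K := by
    have := hK.conv hx0 (hK.symm _ hx0) (a := 1/2) (b := 1/2) (by norm_num) (by norm_num) (by norm_num)
    simpa using this
  have hup : FF (2 ^ k * s) K d ≤ volume K := by
    unfold FF
    rw [lintegral_indicator hmeas]
    calc _ ≤ ∫⁻ y in K, 1 := by
          gcongr with y
          unfold gg
          rw [ENNReal.ofReal_le_one, Real.exp_le_one_iff]
          have : 0 ≤ 2 ^ k * s * ‖d - y‖ ^ 2 := by positivity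
          linarith
      _ = _ := by simp
  set r : ℝ := (2 ^ k)⁻¹ with hr
  have hr0 : 0 < r := by positivity
  have hr1 : r ≤ 1 := inv_le_one_of_one_le₀ (one_le_pow₀ (by norm_num))
  have hsub : r • K ⊆ K := by
    rintro _ ⟨x, hx, rfl⟩
    exact hK.conv.smul_mem_of_zero_mem h0 hx ⟨hr0.le, hr1⟩
  have hlow : ENNReal.ofReal (Real.exp (-(s * ρ ^ 2))) * (ENNReal.ofReal (r ^ m) * volume K) ≤
      FF (2 ^ k * s) K 0 := by
    have hv : volume (r • K) = ENNReal.ofReal (r ^ m) * volume K := by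
      rw [Measure.addHaar_smul, abs_of_pos (by positivity)]; simp
    rw [← hv]
    unfold FF
    rw [lintegral_indicator hmeas]
    calc _ = ∫⁻ y in r • K, ENNReal.ofReal (Real.exp (-(s * ρ ^ 2))) := by simp
      _ ≤ ∫⁻ y in r • K, gg (2 ^ k * s) (0 - y) := by
          refine setLIntegral_mono ((gg_meas _).comp (measurable_const.sub measurable_id)) ?_
          rintro _ ⟨x, hx, rfl⟩
          unfold gg
          gcongr
          have hx' := hK.bdd hx
          simp only [mem_closedBall, dist_zero_right] at hx'
          simp only [zero_sub, norm_neg, norm_smul, Real.norm_eq_abs, abs_of_pos hr0]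
          have e1 : -(2 ^ k * s) * (r * ‖x‖) ^ 2 = -(s * (r * ‖x‖ ^ 2)) := by
            rw [hr]; field_simp
          rw [e1]
          have : r * ‖x‖ ^ 2 ≤ 1 * ρ ^ 2 := by gcongr
          rw [one_mul] at this
          gcongr
      _ ≤ _ := lintegral_mono_set hsub
  refine hup.trans ?_
  calc volume K = ENNReal.ofReal (Real.exp (s * ρ ^ 2) * ((2 ^ k : ℕ) : ℝ) ^ m) *
        (ENNReal.ofReal (Real.exp (-(s * ρ ^ 2))) * (ENNReal.ofReal (r ^ m) * volume K)) := by
        rw [← mul_assoc, ← mul_assoc, ← ENNReal.ofReal_mul (by positivity),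
          ← ENNReal.ofReal_mul (by positivity)]
        have : Real.exp (s * ρ ^ 2) * ((2 ^ k : ℕ) : ℝ) ^ m * Real.exp (-(s * ρ ^ 2)) * r ^ m = 1 := by
          rw [Real.exp_neg, hr, inv_pow]; push_cast; field_simp
        rw [this]; simp
    _ ≤ _ := by gcongr

lemma anderson {m : ℕ} {ρ s : ℝ} (hs : 0 < s) (d : EE m) (K : Set (EE m)) (hK : Adm ρ K) :
    FF s K d ≤ FF s K 0 := by
  have key : ∀ B : ℝ, 1 < B → FF s K d ≤ ENNReal.ofReal B * FF s K 0 := by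
    intro B hB
    have h1 := tendsto_pow_const_div_const_pow_of_one_lt m hB
    have h2 := h1.comp (tendsto_pow_atTop_atTop_of_one_lt (r := 2) (by norm_num : 1 < 2))
    have h3 := h2.eventually (gt_mem_nhds (inv_pos.mpr (Real.exp_pos (s * ρ ^ 2))))
    obtain ⟨k, hk⟩ := h3.exists
    simp only [Function.comp] at hk
    refine iter (by linarith) k s (fun K hK => (crude hs d k K hK).trans ?_) K hK
    gcongr
    have hBp : 0 < B ^ (2 ^ k) := by positivity
    rw [div_lt_iff₀ hBp] at hk
    have := mul_le_mul_of_nonneg_left hk.le (Real.exp_pos (s * ρ ^ 2)).le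
    rwa [mul_inv_cancel_left₀ (Real.exp_pos _).ne'] at this
  have hlim : Filter.Tendsto (fun B : ℝ => ENNReal.ofReal B * FF s K 0) (nhdsWithin 1 (Ioi 1))
      (nhds (ENNReal.ofReal 1 * FF s K 0)) := by
    refine ENNReal.Tendsto.mul_const ?_ (by simp)
    exact (ENNReal.continuous_ofReal.tendsto 1).mono_left nhdsWithin_le_nhds
  rw [ENNReal.ofReal_one, one_mul] at hlim
  exact ge_of_tendsto hlim (by filter_upwards [self_mem_nhdsWithin] with B hB using key B hB)

lemma midpoint_ineq {m : ℕ} {ρ s : ℝ} (hs : 0 < s) {Ω : Set (EE m)} (h : Convex ℝ Ω)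
    (hc : IsClosed Ω) (hb : Ω ⊆ closedBall 0 ρ) (a d : EE m) :
    FF s Ω (a + d) * FF s Ω (a - d) ≤ FF s Ω a ^ 2 := by
  obtain ⟨c, hc'⟩ := prod_formula m
  have h1 := hc' Ω hc.measurableSet s a d
  have h2 := hc' Ω hc.measurableSet s a 0
  rw [add_zero, sub_zero] at h2
  rw [pow_two, h1, h2]
  gcongr with p
  exact anderson (by positivity) d _ (KK_adm h hc hb p)

/-- Real-valued Gaussian mass. -/
def WW {m : ℕ} (s : ℝ) (Ω : Set (EE m)) (x : EE m) : ℝ :=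
  ∫ y in Ω, Real.exp (-s * ‖x - y‖ ^ 2)

lemma WW_int {m : ℕ} (s : ℝ) {Ω : Set (EE m)} (hΩ : IsCompact Ω) (x : EE m) :
    IntegrableOn (fun y => Real.exp (-s * ‖x - y‖ ^ 2)) Ω := by
  apply ContinuousOn.integrableOn_compact hΩ
  fun_prop

lemma WW_FF {m : ℕ} (s : ℝ) {Ω : Set (EE m)} (hΩ : IsCompact Ω) (x : EE m) :
    ENNReal.ofReal (WW s Ω x) = FF s Ω x := by
  unfold WW FF
  rw [lintegral_indicator hΩ.measurableSet, ofReal_integral_eq_lintegral_ofReal (WW_int s hΩ x)]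
  · rfl
  · exact Filter.Eventually.of_forall fun y => (Real.exp_pos _).le

lemma WW_nonneg {m : ℕ} (s : ℝ) (Ω : Set (EE m)) (x : EE m) : 0 ≤ WW s Ω x :=
  integral_nonneg fun y => (Real.exp_pos _).le

lemma WW_pos {m : ℕ} (s : ℝ) {Ω : Set (EE m)} (hΩ : IsCompact Ω)
    (hint : (interior Ω).Nonempty) (x : EE m) : 0 < WW s Ω x := by
  unfold WW
  have hv : 0 < volume Ω :=
    (isOpen_interior.measure_pos volume hint).trans_le (measure_mono interior_subset)
  have : NeZero (volume.restrict Ω) := ⟨by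
    rw [Ne, Measure.restrict_eq_zero]; exact hv.ne'⟩
  exact integral_exp_pos (WW_int s hΩ x)

lemma WW_mid {m : ℕ} {s : ℝ} (hs : 0 < s) {Ω : Set (EE m)} (h : Convex ℝ Ω)
    (hΩ : IsCompact Ω) (a d : EE m) :
    WW s Ω (a + d) * WW s Ω (a - d) ≤ WW s Ω a ^ 2 := by
  obtain ⟨ρ, hρ⟩ := hΩ.isBounded.subset_closedBall 0
  have h1 := midpoint_ineq hs h hΩ.isClosed hρ a d
  rw [← WW_FF s hΩ, ← WW_FF s hΩ, ← WW_FF s hΩ, ← ENNReal.ofReal_mul (WW_nonneg _ _ _),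
    ← ENNReal.ofReal_pow (WW_nonneg _ _ _)] at h1
  exact (ENNReal.ofReal_le_ofReal_iff (by positivity)).1 h1

lemma WW_diff {m : ℕ} {s : ℝ} (hs : 0 < s) {Ω : Set (EE m)}
    (hΩ : IsCompact Ω) : Differentiable ℝ (WW s Ω) := by
  intro x₀
  obtain ⟨ρ, hρ⟩ := hΩ.isBounded.subset_closedBall 0
  let F' : EE m → EE m → EE m →L[ℝ] ℝ := fun x y =>
    Real.exp (-s * ‖x - y‖ ^ 2) • ((-s) • ((2 : ℝ) • innerSL ℝ (x - y)))
  have hF' : ∀ x y : EE m, HasFDerivAt (fun x => Real.exp (-s * ‖x - y‖ ^ 2)) (F' x y) x := by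
    intro x y
    have h1 : HasFDerivAt (fun x : EE m => x - y) (ContinuousLinearMap.id ℝ (EE m)) x :=
      (hasFDerivAt_id x).sub_const y
    have h2 := ((h1.norm_sq).const_mul (-s)).exp
    refine h2.congr_fderiv ?_
    ext v; simp [F']
  have := hasFDerivAt_integral_of_dominated_of_fderiv_le (μ := volume.restrict Ω) (𝕜 := ℝ)
    (F := fun x y => Real.exp (-s * ‖x - y‖ ^ 2)) (F' := F') (x₀ := x₀)
    (bound := fun _ => 2 * s * (‖x₀‖ + 1 + ρ)) (s := ball x₀ 1) (ball_mem_nhds _ one_pos)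
    (Filter.Eventually.of_forall fun x => (WW_int s hΩ x).aestronglyMeasurable)
    (WW_int s hΩ x₀) ?_ ?_ ?_ ?_
  · exact this.differentiableAt
  · apply Continuous.aestronglyMeasurable
    unfold F'
    fun_prop
  · refine (ae_restrict_mem hΩ.measurableSet).mono fun y hy x hx => ?_
    have hy' := hρ hy
    simp only [mem_closedBall, dist_zero_right] at hy'
    rw [mem_ball, dist_eq_norm] at hx
    have hxy : ‖x - y‖ ≤ ‖x₀‖ + 1 + ρ := by
      have : x - y = (x - x₀) + x₀ - y := by abel
      rw [this]
      have h1 := norm_sub_le ((x - x₀) + x₀) y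
      have h2 := norm_add_le (x - x₀) x₀
      linarith
    simp only [F', norm_smul, norm_neg, Real.norm_eq_abs, abs_of_pos hs, Real.abs_exp,
      innerSL_apply_norm, abs_two]
    have he : Real.exp (-s * ‖x - y‖ ^ 2) ≤ 1 := by
      rw [Real.exp_le_one_iff]
      have : 0 ≤ s * ‖x - y‖ ^ 2 := by positivity
      linarith
    calc _ ≤ 1 * (s * (2 * (‖x₀‖ + 1 + ρ))) := by gcongr
      _ = _ := by ring
  · exact integrableOn_const hΩ.measure_lt_top.ne
  · exact Filter.Eventually.of_forall fun y x _ => hF' x y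

lemma WW_decay {m : ℕ} {s : ℝ} (hs : 0 < s) {Ω : Set (EE m)}
    (hΩ : IsCompact Ω) : Filter.Tendsto (WW s Ω) (Filter.cocompact (EE m)) (nhds 0) := by
  have : (Filter.cocompact (EE m)).IsCountablyGenerated := by
    rw [← Metric.cobounded_eq_cocompact, ← comap_norm_atTop]
    infer_instance
  have h0 : (0:ℝ) = ∫ y in Ω, (0:ℝ) := by simp
  rw [h0]
  unfold WW
  refine tendsto_integral_filter_of_dominated_convergence (fun _ => 1)
    (Filter.Eventually.of_forall fun x => (WW_int s hΩ x).aestronglyMeasurable) ?_ ?_ ?_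
  · refine Filter.Eventually.of_forall fun x => Filter.Eventually.of_forall fun y => ?_
    rw [Real.norm_eq_abs, Real.abs_exp, Real.exp_le_one_iff]
    have : 0 ≤ s * ‖x - y‖ ^ 2 := by positivity
    linarith
  · exact integrableOn_const hΩ.measure_lt_top.ne
  · refine Filter.Eventually.of_forall fun y => ?_
    apply Real.tendsto_exp_atBot.comp
    have h1 : Filter.Tendsto (fun x : EE m => ‖x - y‖) (Filter.cocompact (EE m)) Filter.atTop :=
      (tendsto_norm_cocompact_atTop (E := EE m)).comp
        (Homeomorph.subRight y).isClosedEmbedding.tendsto_cocompact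
    have h2 := (Filter.tendsto_pow_atTop (two_ne_zero)).comp h1
    exact h2.const_mul_atTop_of_neg (by linarith : -s < 0)

lemma WW_analytic {m : ℕ} {s : ℝ} {Ω : Set (EE m)}
    (hΩ : IsCompact Ω) (c v : EE m) : AnalyticOnNhd ℝ (fun r : ℝ => WW s Ω (c + r • v)) univ := by
  let dens : EE m → ENNReal := fun y => ENNReal.ofReal (Real.exp (-s * ‖c - y‖ ^ 2))
  have hd : Measurable dens := by unfold dens; fun_prop
  let μ : Measure (EE m) := (volume.restrict Ω).withDensity dens
  let X : EE m → ℝ := fun y => -2 * s * inner ℝ (c - y) v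
  have hX : Continuous X := by unfold X; fun_prop
  have hset : ProbabilityTheory.integrableExpSet X μ = univ := by
    refine eq_univ_of_forall fun r => ?_
    change Integrable (fun y => Real.exp (r * X y)) μ
    rw [integrable_withDensity_iff_integrable_smul' hd (by simp [dens])]
    apply ContinuousOn.integrableOn_compact hΩ
    apply Continuous.continuousOn
    have : Continuous fun y => (dens y).toReal := by
      simp only [dens, ENNReal.toReal_ofReal (Real.exp_pos _).le]
      fun_prop
    fun_prop
  have hA : AnalyticOnNhd ℝ (ProbabilityTheory.mgf X μ) univ := by
    have := ProbabilityTheory.analyticOnNhd_mgf (X := X) (μ := μ)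
    rwa [hset, interior_univ] at this
  have hE : AnalyticOnNhd ℝ (fun r : ℝ => Real.exp (-s * (r ^ 2 * ‖v‖ ^ 2))) univ := by
    intro r _
    fun_prop
  have := hE.mul hA
  refine this.congr isOpen_univ fun r _ => ?_
  simp only [Pi.mul_apply, ProbabilityTheory.mgf, WW]
  unfold μ
  rw [integral_withDensity_eq_integral_toReal_smul hd (by simp [dens]), ← integral_const_mul]
  congr 1
  ext y
  simp only [dens, ENNReal.toReal_ofReal (Real.exp_pos _).le, smul_eq_mul]
  rw [← Real.exp_add, ← Real.exp_add]
  congr 1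
  have e : c + r • v - y = (c - y) + r • v := by abel
  rw [e, norm_add_sq_real, inner_smul_right, norm_smul, mul_pow, Real.norm_eq_abs, sq_abs]
  simp only [X]
  ring

lemma half_seq : Filter.Tendsto (fun k : ℕ => ((1:ℝ) / 2) ^ k) Filter.atTop
    (nhdsWithin 0 {0}ᶜ) := by
  rw [tendsto_nhdsWithin_iff]
  refine ⟨tendsto_pow_atTop_nhds_zero_of_lt_one (by norm_num) (by norm_num), ?_⟩
  exact Filter.Eventually.of_forall fun k => by simp

lemma log_seq {m : ℕ} {s : ℝ} (hs : 0 < s) {Ω : Set (EE m)} (h : Convex ℝ Ω)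
    (hΩ : IsCompact Ω) (hint : (interior Ω).Nonempty) (x v : EE m) (k : ℕ) :
    (1/2:ℝ) ^ k * (Real.log (WW s Ω (x + v)) - Real.log (WW s Ω x)) ≤
      Real.log (WW s Ω (x + (1/2:ℝ) ^ k • v)) - Real.log (WW s Ω x) := by
  induction k with
  | zero => simp
  | succ k ih =>
    have h1 := WW_mid hs h hΩ (x + (1/2:ℝ) ^ (k+1) • v) ((1/2:ℝ) ^ (k+1) • v)
    have e1 : x + (1/2:ℝ) ^ (k+1) • v + (1/2:ℝ) ^ (k+1) • v = x + (1/2:ℝ) ^ k • v := by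
      rw [add_assoc, ← add_smul]; congr 2; ring
    rw [e1, add_sub_cancel_right] at h1
    have p := WW_pos s hΩ hint
    have h2 := Real.log_le_log (mul_pos (p _) (p _)) h1
    rw [Real.log_mul (p _).ne' (p _).ne', Real.log_pow] at h2
    push_cast at h2
    rw [pow_succ] at h2 ⊢
    linarith

lemma crit_max {m : ℕ} {s : ℝ} (hs : 0 < s) {Ω : Set (EE m)} (h : Convex ℝ Ω)
    (hΩ : IsCompact Ω) (hint : (interior Ω).Nonempty) (x : EE m)
    (hx : HasFDerivAt (WW s Ω) (0 : EE m →L[ℝ] ℝ) x) (y : EE m) : WW s Ω y ≤ WW s Ω x := by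
  have p := WW_pos s hΩ hint
  set v := y - x with hv
  have hy : x + v = y := by simp [hv]
  have hl : HasFDerivAt (fun z => Real.log (WW s Ω z)) (0 : EE m →L[ℝ] ℝ) x := by
    have := hx.log (p x).ne'
    rwa [smul_zero] at this
  have hline : HasDerivAt (fun r : ℝ => x + r • v) v 0 := by
    have := ((hasDerivAt_id (0:ℝ)).smul_const v).const_add x
    simpa using this
  have hl' : HasFDerivAt (fun z => Real.log (WW s Ω z)) (0 : EE m →L[ℝ] ℝ) (x + (0:ℝ) • v) := by
    simpa using hl
  have hd := hl'.comp_hasDerivAt (0:ℝ) hline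
  have ht := (hasDerivAt_iff_tendsto_slope_zero.1 hd).comp half_seq
  have hge : Real.log (WW s Ω (x + v)) - Real.log (WW s Ω x) ≤ 0 := by
    refine ge_of_tendsto (b := Real.log (WW s Ω (x + v)) - Real.log (WW s Ω x)) ht ?_
    refine Filter.Eventually.of_forall fun k => ?_
    have hk := log_seq hs h hΩ hint x v k
    simp only [Function.comp, zero_add, zero_smul, add_zero, smul_eq_mul]
    rw [inv_mul_eq_div, le_div_iff₀ (by positivity), mul_comm]
    exact hk
  rw [hy] at hge
  exact (Real.log_le_log_iff (p _) (p _)).1 (by linarith)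

lemma max_unique {m : ℕ} {s : ℝ} (hs : 0 < s) {Ω : Set (EE m)} (h : Convex ℝ Ω)
    (hΩ : IsCompact Ω) (hint : (interior Ω).Nonempty) (x c : EE m)
    (hc : ∀ y, WW s Ω y ≤ WW s Ω c) (hx : WW s Ω x = WW s Ω c) : x = c := by
  by_contra hne
  have p := WW_pos s hΩ hint
  set v := x - c with hv
  have hv0 : v ≠ 0 := sub_ne_zero.2 hne
  have hy : c + v = x := by simp [hv]
  have hk : ∀ k : ℕ, WW s Ω (c + (1/2:ℝ) ^ k • v) = WW s Ω c := by
    intro k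
    have := log_seq hs h hΩ hint c v k
    rw [hy, hx, sub_self, mul_zero] at this
    exact le_antisymm (hc _) ((Real.log_le_log_iff (p _) (p _)).1 (by linarith))
  have hA := WW_analytic (s := s) hΩ c v
  have heq := hA.eq_of_frequently_eq (g := fun _ => WW s Ω c) (z₀ := 0) analyticOnNhd_const
    (half_seq.frequently (Filter.Frequently.of_forall hk))
  have ht : Filter.Tendsto (fun n : ℕ => c + (n:ℝ) • v) Filter.atTop (Filter.cocompact (EE m)) := by
    rw [← Metric.cobounded_eq_cocompact, ← tendsto_norm_atTop_iff_cobounded]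
    have h1 : Filter.Tendsto (fun n : ℕ => (n:ℝ) * ‖v‖ - ‖c‖) Filter.atTop Filter.atTop :=
      Filter.tendsto_atTop_add_const_right _ _
        (tendsto_natCast_atTop_atTop.atTop_mul_const (norm_pos_iff.2 hv0))
    refine Filter.tendsto_atTop_mono (fun n => ?_) h1
    have h2 := norm_sub_le (c + (n:ℝ) • v) c
    rw [add_sub_cancel_left, norm_smul] at h2
    simp only [Real.norm_natCast] at h2
    linarith
  have h3 := (WW_decay hs hΩ).comp ht
  have h4 : (WW s Ω) ∘ (fun n : ℕ => c + (n:ℝ) • v) = fun _ => WW s Ω c := by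
    ext n; exact congrFun heq n
  rw [h4] at h3
  exact (p c).ne' (tendsto_nhds_unique tendsto_const_nhds h3)

lemma exists_max {m : ℕ} {s : ℝ} (hs : 0 < s) {Ω : Set (EE m)}
    (hΩ : IsCompact Ω) (hint : (interior Ω).Nonempty) :
    ∃ c, ∀ y, WW s Ω y ≤ WW s Ω c := by
  apply (WW_diff hs hΩ).continuous.exists_forall_ge' 0
  filter_upwards [(WW_decay hs hΩ).eventually (gt_mem_nhds (WW_pos s hΩ hint 0))] with x hx
  exact le_of_lt hx

theorem stmt14 {m : ℕ} (Ω : Set (EuclideanSpace ℝ (Fin m)))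
    (hconv : Convex ℝ Ω) (hcomp : IsCompact Ω) (hint : (interior Ω).Nonempty)
    (t : ℝ) (ht : 0 < t) :
    ∃ c : EuclideanSpace ℝ (Fin m),
      HasFDerivAt (fun x : EuclideanSpace ℝ (Fin m) => ∫ y in Ω, heatKernel m (x - y) t)
        (0 : EuclideanSpace ℝ (Fin m) →L[ℝ] ℝ) c ∧
      (∀ x : EuclideanSpace ℝ (Fin m),
        HasFDerivAt (fun x : EuclideanSpace ℝ (Fin m) => ∫ y in Ω, heatKernel m (x - y) t)
          (0 : EuclideanSpace ℝ (Fin m) →L[ℝ] ℝ) x → x = c) ∧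
      (∀ x : EuclideanSpace ℝ (Fin m), x ≠ c →
        (∫ y in Ω, heatKernel m (x - y) t) < ∫ y in Ω, heatKernel m (c - y) t) := by
  have hs : 0 < 1 / (4 * t) := by positivity
  set C : ℝ := (4 * Real.pi * t) ^ (-(m : ℝ) / 2) with hC
  have hC0 : 0 < C := Real.rpow_pos_of_pos (by positivity) _
  have key : ∀ x : EuclideanSpace ℝ (Fin m),
      ∫ y in Ω, heatKernel m (x - y) t = C * WW (1 / (4 * t)) Ω x := by
    intro x
    unfold WW heatKernel
    rw [← integral_const_mul]
    congr 1
    ext y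
    congr 2
    ring
  simp only [key]
  obtain ⟨c, hc⟩ := exists_max hs hcomp hint
  have hcrit : HasFDerivAt (WW (1 / (4 * t)) Ω) (0 : EE m →L[ℝ] ℝ) c := by
    have h1 := (WW_diff hs hcomp c).hasFDerivAt
    have h2 : IsLocalMax (WW (1 / (4 * t)) Ω) c := Filter.Eventually.of_forall hc
    rwa [h2.fderiv_eq_zero] at h1
  refine ⟨c, ?_, ?_, ?_⟩
  · simpa using hcrit.const_mul C
  · intro x hx
    have h1 : HasFDerivAt (WW (1 / (4 * t)) Ω) (0 : EE m →L[ℝ] ℝ) x := by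
      have := hx.const_mul C⁻¹
      simpa [inv_mul_cancel_left₀ hC0.ne'] using this
    have h2 := crit_max hs hconv hcomp hint x h1
    exact max_unique hs hconv hcomp hint x c hc (le_antisymm (hc x) (h2 c))
  · intro x hx
    refine mul_lt_mul_of_pos_left (lt_of_le_of_ne (hc x) fun he => hx ?_) hC0
    exact max_unique hs hconv hcomp hint x c hc he
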